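/- Let d_x, d_y be positive integers, let μ be a Borel probability measure on ℝ^{d_x} and ν a Borel probability measure on ℝ^{d_y}, both with finite fourth moments, and set M := sqrt(M₂(μ) M₂(ν)). Define F₂(μ,ν) := inf_{π ∈ Π(μ,ν)} −2 ∬ ⟨x,x'⟩⟨y,y'⟩ dπ⊗π(x,y,x',y'), and for A ∈ ℝ^{d_x×d_y} let IOT_A(μ,ν) be the optimal transport cost between μ and ν with cost c_A(x,y) = −8 xᵀ A y. Then F₂(μ,ν) = inf_{A ∈ ℝ^{d_x×d_y}} ( 8‖A‖_F² + IOT_A(μ,ν) ), and the infimum is achieved at some A* in the rectangle [−M/2, M/2]^{d_x×d_y}. Moreover, denoting by π*_A an optimal coupling for IOT_A(μ,ν): (i) if A* achieves the infimum, then π*_{A*} is an optimal coupling for IGW(μ,ν) and A* = (1/2)∫ x yᵀ dπ*_{A*}(x,y); (ii) conversely, there exists an optimal IGW coupling π* ∈ Π(μ,ν) such that A* = (1/2)∫ x yᵀ dπ*(x,y), in which case π*_{A*} = π*. -/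

import Mathlib

open MeasureTheory Filter Matrix Set
open scoped RealInnerProductSpace ENNReal NNReal

noncomputable section

abbrev Ed (d : ℕ) : Type := EuclideanSpace ℝ (Fin d)

variable {dx dy : ℕ}

/-- Second (absolute, uncentered) moment. -/
def M2 {d : ℕ} (μ : Measure (Ed d)) : ℝ := ∫ x, ‖x‖ ^ 2 ∂μ

/-- Couplings of `μ` on `ℝ^{dx}` and `ν` on `ℝ^{dy}`. -/
def IsCoupling (π : Measure (Ed dx × Ed dy)) (μ : Measure (Ed dx)) (ν : Measure (Ed dy)) :
    Prop :=
  π.map Prod.fst = μ ∧ π.map Prod.snd = ν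

/-- The inner-product GW distortion cost of a coupling. -/
def igwCost (π : Measure (Ed dx × Ed dy)) : ℝ :=
  ∫ p, (⟪p.1.1, p.2.1⟫ - ⟪p.1.2, p.2.2⟫) ^ 2 ∂(π.prod π)

/-- The inner-product Gromov-Wasserstein distance. -/
def IGW (μ : Measure (Ed dx)) (ν : Measure (Ed dy)) : ℝ :=
  Real.sqrt (sInf {c : ℝ | ∃ π : Measure (Ed dx × Ed dy), IsCoupling π μ ν ∧ c = igwCost π})

/-- Optimal IGW coupling. -/
def IsOptIGW (π : Measure (Ed dx × Ed dy)) (μ : Measure (Ed dx)) (ν : Measure (Ed dy)) :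
    Prop :=
  IsCoupling π μ ν ∧
    ∀ π' : Measure (Ed dx × Ed dy), IsCoupling π' μ ν → igwCost π ≤ igwCost π'

/-- Uncentered cross-covariance matrix `∫ x yᵀ dπ` of a coupling. -/
def crossCov (π : Measure (Ed dx × Ed dy)) : Matrix (Fin dx) (Fin dy) ℝ :=
  Matrix.of fun i j => ∫ p, p.1 i * p.2 j ∂π

/-- Squared Frobenius norm. -/
def frobSq (A : Matrix (Fin dx) (Fin dy) ℝ) : ℝ := ∑ i, ∑ j, A i j ^ 2

/-- Optimal transport cost with cost function `c`. -/
def otCost (c : Ed dx → Ed dy → ℝ) (μ : Measure (Ed dx)) (ν : Measure (Ed dy)) : ℝ :=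
  sInf {v : ℝ | ∃ π : Measure (Ed dx × Ed dy), IsCoupling π μ ν ∧ v = ∫ p, c p.1 p.2 ∂π}

/-- The cost `c_A(x,y) = -8 xᵀ A y`. -/
def costA (A : Matrix (Fin dx) (Fin dy) ℝ) : Ed dx → Ed dy → ℝ :=
  fun x y => -8 * ∑ i, ∑ j, x i * A i j * y j

/-- `IOT_A(μ,ν)`: the OT problem with cost `c_A`. -/
def IOT (A : Matrix (Fin dx) (Fin dy) ℝ) (μ : Measure (Ed dx)) (ν : Measure (Ed dy)) : ℝ :=
  otCost (costA A) μ ν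

/-- An optimal coupling for the OT problem with cost `c`. -/
def IsOptOT (c : Ed dx → Ed dy → ℝ) (π : Measure (Ed dx × Ed dy)) (μ : Measure (Ed dx))
    (ν : Measure (Ed dy)) : Prop :=
  IsCoupling π μ ν ∧ ∀ π' : Measure (Ed dx × Ed dy), IsCoupling π' μ ν →
    (∫ p, c p.1 p.2 ∂π) ≤ ∫ p, c p.1 p.2 ∂π'

/-- `F₂(μ,ν) = inf_{π ∈ Π(μ,ν)} -2 ∬ ⟨x,x'⟩⟨y,y'⟩ dπ⊗π`. -/
def F2 (μ : Measure (Ed dx)) (ν : Measure (Ed dy)) : ℝ :=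
  sInf {v : ℝ | ∃ π : Measure (Ed dx × Ed dy), IsCoupling π μ ν ∧
    v = -2 * ∫ p, ⟪p.1.1, p.2.1⟫ * ⟪p.1.2, p.2.2⟫ ∂(π.prod π)}

/-! Let `C = ∫ x yᵀ dπ` be the cross-covariance of a coupling `π`. Expanding the square, the IGW
cost of `π` is a constant depending only on the marginals minus `2‖C‖²`, and completing the
square, `8‖A‖² - 8⟨A, C⟩ = 8‖A - C/2‖² - 2‖C‖²`. Minimizing the right-hand side over `A` first
gives `-2‖C‖²`, attained only at `A = C/2`; minimizing the left-hand side over `π` first gives the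
dual objective. The minimizing couplings exist because the couplings of `μ` and `ν` form a weakly
compact set, on which `π ↦ C` is continuous: the integrands `xᵢ yⱼ` are dominated by `‖x‖² +
‖y‖²`, whose tails are controlled by the fixed marginals alone. -/

open scoped Topology

/-- Truncation of a real number to `[-R, R]`. -/
def clip (R t : ℝ) : ℝ := max (-R) (min t R)

lemma continuous_clip (R : ℝ) : Continuous (clip R) := by
  unfold clip
  fun_prop

lemma abs_clip_le {R : ℝ} (hR : 0 ≤ R) (t : ℝ) : |clip R t| ≤ R :=
  abs_le.2 ⟨le_max_left _ _, max_le (by linarith) (min_le_right _ _)⟩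

lemma abs_sub_clip {R : ℝ} (hR : 0 ≤ R) (t : ℝ) : |t - clip R t| = (|t| - R)⁺ := by
  rw [clip, posPart_def]
  grind

lemma abs_sub_clip_add_le {r t a b : ℝ} (hr : 0 ≤ r) (ht : |t| ≤ a + b) :
    |t - clip (r + r) t| ≤ (a - r)⁺ + (b - r)⁺ := by
  rw [abs_sub_clip (add_nonneg hr hr)]
  refine sup_le ?_ (by positivity)
  linarith [le_posPart (a - r), le_posPart (b - r)]

section Couplings

variable {X Y : Type*} [MeasurableSpace X] [MeasurableSpace Y]

lemma tendsto_integral_posPart_sub_atTop {μ : Measure X} {f : X → ℝ} (hf : Integrable f μ) :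
    Tendsto (fun r : ℝ => ∫ x, (f x - r)⁺ ∂μ) atTop (𝓝 0) := by
  have h_meas (r : ℝ) : AEStronglyMeasurable (fun x => (f x - r)⁺) μ :=
    (continuous_posPart.comp (continuous_sub_right r)).comp_aestronglyMeasurable hf.1
  have h_bound : ∀ᶠ r : ℝ in atTop, ∀ᵐ x ∂μ, ‖(f x - r)⁺‖ ≤ |f x| := by
    filter_upwards [eventually_ge_atTop 0] with r hr
    refine ae_of_all _ fun x => ?_
    rw [Real.norm_of_nonneg (posPart_nonneg _)]
    exact sup_le (by linarith [le_abs_self (f x)]) (abs_nonneg _)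
  have h_lim (x : X) : Tendsto (fun r : ℝ => (f x - r)⁺) atTop (𝓝 0) := by
    refine tendsto_const_nhds.congr' ?_
    filter_upwards [eventually_ge_atTop (f x)] with r hr
    exact (posPart_eq_zero.2 (sub_nonpos.2 hr)).symm
  simpa using tendsto_integral_filter_of_dominated_convergence (fun x => |f x|)
    (Eventually.of_forall h_meas) h_bound hf.abs (ae_of_all _ h_lim)

lemma integrable_comp_fst {π : Measure (X × Y)} {f : X → ℝ} (hf : Integrable f π.fst) :
    Integrable (fun p => f p.1) π :=
  hf.comp_measurable measurable_fst

lemma integrable_comp_snd {π : Measure (X × Y)} {f : Y → ℝ} (hf : Integrable f π.snd) :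
    Integrable (fun p => f p.2) π :=
  hf.comp_measurable measurable_snd

lemma abs_integral_sub_integral_clip_le {π : Measure (X × Y)} [IsFiniteMeasure π]
    {c : X × Y → ℝ} {a : X → ℝ} {b : Y → ℝ} {r : ℝ} (hr : 0 ≤ r)
    (hc : AEStronglyMeasurable c π) (ha : Integrable a π.fst) (hb : Integrable b π.snd)
    (hcab : ∀ p, |c p| ≤ a p.1 + b p.2) :
    |(∫ p, c p ∂π) - ∫ p, clip (r + r) (c p) ∂π| ≤
      (∫ x, (a x - r)⁺ ∂π.fst) + ∫ y, (b y - r)⁺ ∂π.snd := by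
  have ha_tail : Integrable (fun x => (a x - r)⁺) π.fst := (ha.sub (integrable_const r)).pos_part
  have hb_tail : Integrable (fun y => (b y - r)⁺) π.snd := (hb.sub (integrable_const r)).pos_part
  have hc_int : Integrable c π :=
    ((integrable_comp_fst ha).add (integrable_comp_snd hb)).mono' hc (ae_of_all _ hcab)
  have h_clip_int : Integrable (fun p => clip (r + r) (c p)) π :=
    .of_bound ((continuous_clip _).comp_aestronglyMeasurable hc) (r + r)
      (ae_of_all _ fun p => abs_clip_le (add_nonneg hr hr) (c p))
  calc |(∫ p, c p ∂π) - ∫ p, clip (r + r) (c p) ∂π|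
      = ‖∫ p, (c p - clip (r + r) (c p)) ∂π‖ := by
        rw [integral_sub hc_int h_clip_int, Real.norm_eq_abs]
    _ ≤ ∫ p, ((a p.1 - r)⁺ + (b p.2 - r)⁺) ∂π :=
        norm_integral_le_of_norm_le
          ((integrable_comp_fst ha_tail).add (integrable_comp_snd hb_tail))
          (ae_of_all _ fun p => abs_sub_clip_add_le hr (hcab p))
    _ = (∫ x, (a x - r)⁺ ∂π.fst) + ∫ y, (b y - r)⁺ ∂π.snd := by
        rw [integral_add (integrable_comp_fst ha_tail) (integrable_comp_snd hb_tail),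
          Measure.fst, Measure.snd, integral_map measurable_fst.aemeasurable ha_tail.1,
          integral_map measurable_snd.aemeasurable hb_tail.1]

/-- The couplings of `μ` and `ν`, as a set in the space of probability measures, so that topological
notions refer to weak convergence. -/
def couplings (μ : Measure X) (ν : Measure Y) : Set (ProbabilityMeasure (X × Y)) :=
  {P | (P : Measure (X × Y)).fst = μ ∧ (P : Measure (X × Y)).snd = ν}

lemma couplings_nonempty (μ : Measure X) (ν : Measure Y) [IsProbabilityMeasure μ]
    [IsProbabilityMeasure ν] : (couplings μ ν).Nonempty :=
  ⟨⟨μ.prod ν, inferInstance⟩, Measure.fst_prod, Measure.snd_prod⟩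

variable [TopologicalSpace X] [TopologicalSpace Y]

lemma isClosed_couplings [OpensMeasurableSpace (X × Y)] [BorelSpace X] [BorelSpace Y]
    [HasOuterApproxClosed X] [HasOuterApproxClosed Y] (μ : Measure X) (ν : Measure Y)
    [IsProbabilityMeasure μ] [IsProbabilityMeasure ν] : IsClosed (couplings μ ν) := by
  let μ' : ProbabilityMeasure X := ⟨μ, inferInstance⟩
  let ν' : ProbabilityMeasure Y := ⟨ν, inferInstance⟩
  have h_eq : couplings μ ν =
      {P | P.map measurable_fst.aemeasurable = μ'} ∩ {P | P.map measurable_snd.aemeasurable = ν'} :=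
    Set.ext fun P => and_congr
      (ProbabilityMeasure.toMeasure_injective.eq_iff
        (a := P.map measurable_fst.aemeasurable) (b := μ'))
      (ProbabilityMeasure.toMeasure_injective.eq_iff
        (a := P.map measurable_snd.aemeasurable) (b := ν'))
  rw [h_eq]
  exact (isClosed_eq (ProbabilityMeasure.continuous_map continuous_fst) continuous_const).inter
    (isClosed_eq (ProbabilityMeasure.continuous_map continuous_snd) continuous_const)

lemma isCompact_couplings [PolishSpace X] [PolishSpace Y] [BorelSpace X] [BorelSpace Y]
    (μ : Measure X) (ν : Measure Y) [IsProbabilityMeasure μ] [IsProbabilityMeasure ν] :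
    IsCompact (couplings μ ν) := by
  rw [← (isClosed_couplings μ ν).closure_eq]
  refine isCompact_closure_of_isTightMeasureSet (.prodMk ?_ ?_)
  · refine (isTightMeasureSet_singleton (μ := μ)).subset ?_
    rintro _ ⟨_, ⟨P, hP, rfl⟩, rfl⟩
    exact hP.1
  · refine (isTightMeasureSet_singleton (μ := ν)).subset ?_
    rintro _ ⟨_, ⟨P, hP, rfl⟩, rfl⟩
    exact hP.2

lemma continuousOn_integral_couplings [OpensMeasurableSpace (X × Y)] {μ : Measure X}
    {ν : Measure Y} {c : X × Y → ℝ} {a : X → ℝ} {b : Y → ℝ} (hc : Continuous c)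
    (ha : Integrable a μ) (hb : Integrable b ν) (hcab : ∀ p, |c p| ≤ a p.1 + b p.2) :
    ContinuousOn (fun P : ProbabilityMeasure (X × Y) => ∫ p, c p ∂(P : Measure (X × Y)))
      (couplings μ ν) := by
  let F (r : ℝ) (P : ProbabilityMeasure (X × Y)) : ℝ :=
    ∫ p, clip (r + r) (c p) ∂(P : Measure (X × Y))
  have hF_cont : ∀ᶠ r in atTop, ContinuousOn (F r) (couplings μ ν) := by
    filter_upwards [eventually_ge_atTop 0] with r hr
    let f : BoundedContinuousFunction (X × Y) ℝ := .ofNormedAddCommGroup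
      (fun p => clip (r + r) (c p)) ((continuous_clip _).comp hc) (r + r)
      (fun p => abs_clip_le (add_nonneg hr hr) (c p))
    exact (ProbabilityMeasure.continuous_integral_boundedContinuousFunction f).continuousOn
  have h_tail : Tendsto (fun r : ℝ => (∫ x, (a x - r)⁺ ∂μ) + ∫ y, (b y - r)⁺ ∂ν) atTop (𝓝 0) := by
    simpa using (tendsto_integral_posPart_sub_atTop ha).add (tendsto_integral_posPart_sub_atTop hb)
  refine TendstoUniformlyOn.continuousOn (F := F) (p := atTop) ?_ hF_cont.frequently
  refine Metric.tendstoUniformlyOn_iff.2 fun ε hε => ?_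
  filter_upwards [eventually_ge_atTop 0, h_tail.eventually_lt_const hε] with r hr hr_tail
  rintro P ⟨rfl, rfl⟩
  exact (abs_integral_sub_integral_clip_le hr hc.aestronglyMeasurable ha hb hcab).trans_lt hr_tail

end Couplings

lemma integral_norm_mul_norm_le_sqrt {Ω E F : Type*} [MeasurableSpace Ω] {μ : Measure Ω}
    [NormedAddCommGroup E] [NormedAddCommGroup F] {f : Ω → E} {g : Ω → F}
    (hf : MemLp f 2 μ) (hg : MemLp g 2 μ) :
    ∫ x, ‖f x‖ * ‖g x‖ ∂μ ≤ √((∫ x, ‖f x‖ ^ 2 ∂μ) * ∫ x, ‖g x‖ ^ 2 ∂μ) := by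
  have h_holder := integral_mul_norm_le_Lp_mul_Lq (p := 2) (q := 2) (μ := μ) .two_two
    (by simpa using hf.norm) (by simpa using hg.norm)
  rw [Real.sqrt_mul (integral_nonneg fun x => by positivity), Real.sqrt_eq_rpow, Real.sqrt_eq_rpow]
  simpa using h_holder

lemma integrable_inner_sq_prod {Ω Ω' E : Type*} [MeasurableSpace Ω] [MeasurableSpace Ω']
    [NormedAddCommGroup E] [InnerProductSpace ℝ E] {μ : Measure Ω} {ν : Measure Ω'}
    [SFinite μ] [SFinite ν] {f : Ω → E} {g : Ω' → E} (hf : MemLp f 2 μ) (hg : MemLp g 2 ν) :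
    Integrable (fun p : Ω × Ω' => ⟪f p.1, g p.2⟫ ^ 2) (μ.prod ν) := by
  refine ((hf.integrable_norm_pow two_ne_zero).mul_prod
    (hg.integrable_norm_pow two_ne_zero)).mono' ((hf.1.comp_fst.inner hg.1.comp_snd).pow 2)
    (ae_of_all _ fun p => ?_)
  rw [Real.norm_of_nonneg (sq_nonneg _), ← mul_pow, ← sq_abs]
  gcongr
  exact abs_real_inner_le_norm _ _

section CrossCov

lemma abs_apply_mul_apply_le (x : Ed dx) (y : Ed dy) (i : Fin dx) (j : Fin dy) :
    |x i * y j| ≤ ‖x‖ * ‖y‖ := by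
  rw [abs_mul]
  exact mul_le_mul (PiLp.norm_apply_le x i) (PiLp.norm_apply_le y j) (abs_nonneg _) (norm_nonneg _)

lemma inner_mul_inner_eq_sum (x x' : Ed dx) (y y' : Ed dy) :
    ⟪x, x'⟫ * ⟪y, y'⟫ = ∑ i, ∑ j, (x i * y j) * (x' i * y' j) := by
  simp only [PiLp.inner_apply, RCLike.inner_apply, conj_trivial, Finset.sum_mul_sum]
  exact Finset.sum_congr rfl fun i _ => Finset.sum_congr rfl fun j _ => by ring

lemma frobSq_nonneg (A : Matrix (Fin dx) (Fin dy) ℝ) : 0 ≤ frobSq A :=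
  Finset.sum_nonneg fun _ _ => Finset.sum_nonneg fun _ _ => sq_nonneg _

lemma frobSq_eq_zero_iff {A : Matrix (Fin dx) (Fin dy) ℝ} : frobSq A = 0 ↔ A = 0 := by
  have h_row (i : Fin dx) : 0 ≤ ∑ j, A i j ^ 2 := Finset.sum_nonneg fun _ _ => sq_nonneg _
  simp [frobSq, Finset.sum_eq_zero_iff_of_nonneg, h_row, sq_nonneg, ← Matrix.ext_iff]

lemma continuous_frobSq : Continuous (frobSq : Matrix (Fin dx) (Fin dy) ℝ → ℝ) := by
  unfold frobSq
  fun_prop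

variable {π : Measure (Ed dx × Ed dy)}

lemma integrable_apply_mul_apply (hx : MemLp Prod.fst 2 π) (hy : MemLp Prod.snd 2 π)
    (i : Fin dx) (j : Fin dy) : Integrable (fun p : Ed dx × Ed dy => p.1 i * p.2 j) π :=
  (hx.norm.integrable_mul hy.norm).mono' (by fun_prop)
    (ae_of_all _ fun p => abs_apply_mul_apply_le p.1 p.2 i j)

lemma abs_crossCov_le_sqrt (hx : MemLp Prod.fst 2 π) (hy : MemLp Prod.snd 2 π)
    (i : Fin dx) (j : Fin dy) :
    |crossCov π i j| ≤ √((∫ p, ‖p.1‖ ^ 2 ∂π) * ∫ p, ‖p.2‖ ^ 2 ∂π) :=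
  calc |crossCov π i j|
      = ‖∫ p, p.1 i * p.2 j ∂π‖ := rfl
    _ ≤ ∫ p, ‖p.1‖ * ‖p.2‖ ∂π :=
        norm_integral_le_of_norm_le (hx.norm.integrable_mul hy.norm)
          (ae_of_all _ fun p => abs_apply_mul_apply_le p.1 p.2 i j)
    _ ≤ √((∫ p, ‖p.1‖ ^ 2 ∂π) * ∫ p, ‖p.2‖ ^ 2 ∂π) := integral_norm_mul_norm_le_sqrt hx hy

lemma integral_costA (hx : MemLp Prod.fst 2 π) (hy : MemLp Prod.snd 2 π)
    (A : Matrix (Fin dx) (Fin dy) ℝ) :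
    ∫ p, costA A p.1 p.2 ∂π = -8 * ∑ i, ∑ j, A i j * crossCov π i j := by
  have h_int (i : Fin dx) (j : Fin dy) :
      Integrable (fun p : Ed dx × Ed dy => A i j * (p.1 i * p.2 j)) π :=
    (integrable_apply_mul_apply hx hy i j).const_mul _
  have h_cost (x : Ed dx) (y : Ed dy) :
      costA A x y = -8 * ∑ i, ∑ j, A i j * (x i * y j) := by
    simp only [costA, mul_assoc, mul_left_comm (A _ _)]
  simp only [h_cost, integral_const_mul]
  rw [integral_finsetSum _ fun i _ => integrable_finsetSum _ fun j _ => h_int i j]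
  simp only [integral_finsetSum _ fun j _ => h_int _ j, integral_const_mul, crossCov,
    Matrix.of_apply]

lemma frobSq_add_integral_costA (hx : MemLp Prod.fst 2 π) (hy : MemLp Prod.snd 2 π)
    (A : Matrix (Fin dx) (Fin dy) ℝ) :
    8 * frobSq A + ∫ p, costA A p.1 p.2 ∂π =
      8 * frobSq (A - (1 / 2 : ℝ) • crossCov π) - 2 * frobSq (crossCov π) := by
  simp only [integral_costA hx hy, frobSq, Finset.mul_sum, ← Finset.sum_add_distrib,
    ← Finset.sum_sub_distrib]
  refine Finset.sum_congr rfl fun i _ => Finset.sum_congr rfl fun j _ => ?_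
  simp only [Matrix.sub_apply, Matrix.smul_apply, smul_eq_mul]
  ring

lemma integrable_inner_mul_inner (hx : MemLp Prod.fst 2 π) (hy : MemLp Prod.snd 2 π) :
    Integrable (fun p : (Ed dx × Ed dy) × Ed dx × Ed dy => ⟪p.1.1, p.2.1⟫ * ⟪p.1.2, p.2.2⟫)
      (π.prod π) := by
  simp only [inner_mul_inner_eq_sum]
  exact integrable_finsetSum _ fun i _ => integrable_finsetSum _ fun j _ =>
    (integrable_apply_mul_apply hx hy i j).mul_prod (integrable_apply_mul_apply hx hy i j)

variable [SFinite π]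

lemma integral_inner_mul_inner (hx : MemLp Prod.fst 2 π) (hy : MemLp Prod.snd 2 π) :
    ∫ p, ⟪p.1.1, p.2.1⟫ * ⟪p.1.2, p.2.2⟫ ∂(π.prod π) = frobSq (crossCov π) := by
  have h_int (i : Fin dx) (j : Fin dy) : Integrable (fun p : (Ed dx × Ed dy) × Ed dx × Ed dy =>
      (p.1.1 i * p.1.2 j) * (p.2.1 i * p.2.2 j)) (π.prod π) :=
    (integrable_apply_mul_apply hx hy i j).mul_prod (integrable_apply_mul_apply hx hy i j)
  simp only [inner_mul_inner_eq_sum, frobSq]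
  rw [integral_finsetSum _ fun i _ => integrable_finsetSum _ fun j _ => h_int i j]
  refine Finset.sum_congr rfl fun i _ => ?_
  rw [integral_finsetSum _ fun j _ => h_int i j]
  refine Finset.sum_congr rfl fun j _ => ?_
  rw [sq]
  exact integral_prod_mul (μ := π) (ν := π) (fun q : Ed dx × Ed dy => q.1 i * q.2 j)
    (fun q => q.1 i * q.2 j)

lemma igwCost_eq_sub_frobSq_crossCov (hx : MemLp Prod.fst 2 π) (hy : MemLp Prod.snd 2 π) :
    igwCost π = (∫ p, ⟪p.1, p.2⟫ ^ 2 ∂(π.fst.prod π.fst)) +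
      (∫ p, ⟪p.1, p.2⟫ ^ 2 ∂(π.snd.prod π.snd)) - 2 * frobSq (crossCov π) := by
  have hx_int : Integrable (fun p => ⟪p.1.1, p.2.1⟫ ^ 2) (π.prod π) :=
    integrable_inner_sq_prod hx hx
  have hy_int : Integrable (fun p => ⟪p.1.2, p.2.2⟫ ^ 2) (π.prod π) :=
    integrable_inner_sq_prod hy hy
  have h_sum_int : Integrable (fun p => ⟪p.1.1, p.2.1⟫ ^ 2 + ⟪p.1.2, p.2.2⟫ ^ 2) (π.prod π) :=
    hx_int.add hy_int
  have h_cross := (integrable_inner_mul_inner hx hy).const_mul 2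
  calc igwCost π
      = ∫ p, (⟪p.1.1, p.2.1⟫ ^ 2 + ⟪p.1.2, p.2.2⟫ ^ 2 -
          2 * (⟪p.1.1, p.2.1⟫ * ⟪p.1.2, p.2.2⟫)) ∂(π.prod π) :=
        integral_congr_ae (ae_of_all _ fun p => by ring)
    _ = (∫ p, ⟪p.1.1, p.2.1⟫ ^ 2 ∂(π.prod π)) + (∫ p, ⟪p.1.2, p.2.2⟫ ^ 2 ∂(π.prod π)) -
          2 * frobSq (crossCov π) := by
        rw [integral_sub h_sum_int h_cross, integral_add hx_int hy_int,
          integral_const_mul, integral_inner_mul_inner hx hy]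
    _ = _ := by
        rw [Measure.fst, Measure.snd, Measure.map_prod_map _ _ measurable_fst measurable_fst,
          Measure.map_prod_map _ _ measurable_snd measurable_snd,
          integral_map (by fun_prop) (by fun_prop), integral_map (by fun_prop) (by fun_prop)]
        rfl

end CrossCov

section Duality

variable {μ : Measure (Ed dx)} {ν : Measure (Ed dy)} {π : Measure (Ed dx × Ed dy)}

namespace IsCoupling

lemma isProbabilityMeasure [IsProbabilityMeasure μ] (hπ : IsCoupling π μ ν) :
    IsProbabilityMeasure π := by
  obtain ⟨rfl, -⟩ := hπ
  exact Measure.isProbabilityMeasure_of_map Prod.fst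

lemma memLp_fst (hπ : IsCoupling π μ ν) (hμ : MemLp id 2 μ) : MemLp Prod.fst 2 π := by
  obtain ⟨rfl, -⟩ := hπ
  exact hμ.comp_of_map measurable_fst.aemeasurable

lemma memLp_snd (hπ : IsCoupling π μ ν) (hν : MemLp id 2 ν) : MemLp Prod.snd 2 π := by
  obtain ⟨-, rfl⟩ := hπ
  exact hν.comp_of_map measurable_snd.aemeasurable

lemma M2_fst (hπ : IsCoupling π μ ν) : M2 μ = ∫ p, ‖p.1‖ ^ 2 ∂π := by
  obtain ⟨rfl, -⟩ := hπ
  exact integral_map measurable_fst.aemeasurable (by fun_prop)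

lemma M2_snd (hπ : IsCoupling π μ ν) : M2 ν = ∫ p, ‖p.2‖ ^ 2 ∂π := by
  obtain ⟨-, rfl⟩ := hπ
  exact integral_map measurable_snd.aemeasurable (by fun_prop)

lemma abs_half_smul_crossCov_le (hπ : IsCoupling π μ ν) (hμ : MemLp id 2 μ) (hν : MemLp id 2 ν)
    (i : Fin dx) (j : Fin dy) :
    |((1 / 2 : ℝ) • crossCov π) i j| ≤ √(M2 μ * M2 ν) / 2 := by
  have h_le := abs_crossCov_le_sqrt (hπ.memLp_fst hμ) (hπ.memLp_snd hν) i j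
  rw [← hπ.M2_fst, ← hπ.M2_snd] at h_le
  rw [Matrix.smul_apply, smul_eq_mul, abs_mul, abs_of_pos one_half_pos]
  linarith

lemma igwCost_eq [IsProbabilityMeasure μ] (hπ : IsCoupling π μ ν) (hμ : MemLp id 2 μ)
    (hν : MemLp id 2 ν) :
    igwCost π = (∫ p, ⟪p.1, p.2⟫ ^ 2 ∂(μ.prod μ)) + (∫ p, ⟪p.1, p.2⟫ ^ 2 ∂(ν.prod ν)) -
      2 * frobSq (crossCov π) := by
  have := hπ.isProbabilityMeasure
  rw [igwCost_eq_sub_frobSq_crossCov (hπ.memLp_fst hμ) (hπ.memLp_snd hν),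
    Measure.fst, Measure.snd, hπ.1, hπ.2]

end IsCoupling

lemma IsOptOT.otCost_eq {c : Ed dx → Ed dy → ℝ} (hπ : IsOptOT c π μ ν) :
    otCost c μ ν = ∫ p, c p.1 p.2 ∂π :=
  IsLeast.csInf_eq ⟨⟨π, hπ.1, rfl⟩, by rintro _ ⟨π', hπ', rfl⟩; exact hπ.2 π' hπ'⟩

lemma continuousOn_crossCov_couplings (hμ : MemLp id 2 μ) (hν : MemLp id 2 ν) :
    ContinuousOn (fun P : ProbabilityMeasure (Ed dx × Ed dy) =>
      crossCov (P : Measure (Ed dx × Ed dy))) (couplings μ ν) := by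
  refine continuousOn_pi.2 fun i => continuousOn_pi.2 fun j => ?_
  refine continuousOn_integral_couplings (by fun_prop) (hμ.integrable_norm_pow two_ne_zero)
    (hν.integrable_norm_pow two_ne_zero) fun p => ?_
  calc |p.1 i * p.2 j| ≤ ‖p.1‖ * ‖p.2‖ := abs_apply_mul_apply_le p.1 p.2 i j
    _ ≤ ‖p.1‖ ^ 2 + ‖p.2‖ ^ 2 := by nlinarith [sq_nonneg (‖p.1‖ - ‖p.2‖)]

variable [IsProbabilityMeasure μ] [IsProbabilityMeasure ν]

lemma exists_isCoupling_forall_comp_crossCov_le (hμ : MemLp id 2 μ) (hν : MemLp id 2 ν)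
    {g : Matrix (Fin dx) (Fin dy) ℝ → ℝ} (hg : Continuous g) :
    ∃ π, IsCoupling π μ ν ∧ ∀ π', IsCoupling π' μ ν → g (crossCov π) ≤ g (crossCov π') := by
  obtain ⟨P, hP, hP_min⟩ := (isCompact_couplings μ ν).exists_isMinOn (couplings_nonempty μ ν)
    (hg.comp_continuousOn (continuousOn_crossCov_couplings hμ hν))
  exact ⟨P, hP, fun π' hπ' =>
    isMinOn_iff.1 hP_min ⟨π', hπ'.isProbabilityMeasure⟩ hπ'⟩

lemma exists_isOptOT_costA (hμ : MemLp id 2 μ) (hν : MemLp id 2 ν)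
    (A : Matrix (Fin dx) (Fin dy) ℝ) : ∃ π, IsOptOT (costA A) π μ ν := by
  obtain ⟨π, hπ, hπ_min⟩ := exists_isCoupling_forall_comp_crossCov_le hμ hν
    (g := fun C => -8 * ∑ i, ∑ j, A i j * C i j) (by fun_prop)
  refine ⟨π, hπ, fun π' hπ' => ?_⟩
  rw [integral_costA (hπ.memLp_fst hμ) (hπ.memLp_snd hν),
    integral_costA (hπ'.memLp_fst hμ) (hπ'.memLp_snd hν)]
  exact hπ_min π' hπ'

lemma isLeast_F2 (hμ : MemLp id 2 μ) (hν : MemLp id 2 ν) :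
    IsLeast ((fun π => -2 * frobSq (crossCov π)) '' {π | IsCoupling π μ ν}) (F2 μ ν) := by
  have hF2 : F2 μ ν = sInf ((fun π => -2 * frobSq (crossCov π)) '' {π | IsCoupling π μ ν}) := by
    refine congrArg sInf (Set.ext fun v => exists_congr fun π => and_congr_right fun hπ => ?_)
    have := hπ.isProbabilityMeasure
    rw [integral_inner_mul_inner (hπ.memLp_fst hμ) (hπ.memLp_snd hν), eq_comm]
  obtain ⟨π, hπ, hπ_min⟩ := exists_isCoupling_forall_comp_crossCov_le hμ hν
    (continuous_frobSq.const_mul (-2))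
  have h_least : IsLeast ((fun π => -2 * frobSq (crossCov π)) '' {π | IsCoupling π μ ν})
      (-2 * frobSq (crossCov π)) := ⟨mem_image_of_mem _ hπ, forall_mem_image.2 hπ_min⟩
  rwa [hF2, h_least.csInf_eq]

lemma IsCoupling.F2_le (hπ : IsCoupling π μ ν) (hμ : MemLp id 2 μ) (hν : MemLp id 2 ν) :
    F2 μ ν ≤ -2 * frobSq (crossCov π) :=
  (isLeast_F2 hμ hν).2 (mem_image_of_mem _ hπ)

lemma IsCoupling.isOptIGW_iff (hπ : IsCoupling π μ ν) (hμ : MemLp id 2 μ) (hν : MemLp id 2 ν) :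
    IsOptIGW π μ ν ↔ F2 μ ν = -2 * frobSq (crossCov π) := by
  constructor
  · intro hπ_opt
    obtain ⟨π₀, hπ₀, hπ₀_eq⟩ := (isLeast_F2 hμ hν).1
    have h_le := hπ_opt.2 π₀ hπ₀
    rw [hπ.igwCost_eq hμ hν, hπ₀.igwCost_eq hμ hν] at h_le
    linarith [hπ.F2_le hμ hν]
  · refine fun h_eq => ⟨hπ, fun π' hπ' => ?_⟩
    rw [hπ.igwCost_eq hμ hν, hπ'.igwCost_eq hμ hν]
    linarith [hπ'.F2_le hμ hν]

lemma exists_isOptIGW (hμ : MemLp id 2 μ) (hν : MemLp id 2 ν) : ∃ π, IsOptIGW π μ ν := by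
  obtain ⟨π, hπ, hπ_eq⟩ := (isLeast_F2 hμ hν).1
  exact ⟨π, (IsCoupling.isOptIGW_iff hπ hμ hν).2 hπ_eq.symm⟩

lemma IsCoupling.F2_le_frobSq_add_integral_costA (hπ : IsCoupling π μ ν) (hμ : MemLp id 2 μ)
    (hν : MemLp id 2 ν) (A : Matrix (Fin dx) (Fin dy) ℝ) :
    F2 μ ν ≤ 8 * frobSq A + ∫ p, costA A p.1 p.2 ∂π := by
  rw [frobSq_add_integral_costA (hπ.memLp_fst hμ) (hπ.memLp_snd hν)]
  linarith [hπ.F2_le hμ hν, frobSq_nonneg (A - (1 / 2 : ℝ) • crossCov π)]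

lemma IsCoupling.frobSq_add_integral_costA_eq_F2_iff (hπ : IsCoupling π μ ν) (hμ : MemLp id 2 μ)
    (hν : MemLp id 2 ν) {A : Matrix (Fin dx) (Fin dy) ℝ} :
    8 * frobSq A + ∫ p, costA A p.1 p.2 ∂π = F2 μ ν ↔
      IsOptIGW π μ ν ∧ A = (1 / 2 : ℝ) • crossCov π := by
  have h_F2 := hπ.F2_le hμ hν
  have h_sq := frobSq_nonneg (A - (1 / 2 : ℝ) • crossCov π)
  rw [frobSq_add_integral_costA (hπ.memLp_fst hμ) (hπ.memLp_snd hν), hπ.isOptIGW_iff hμ hν,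
    ← sub_eq_zero (a := A), ← frobSq_eq_zero_iff]
  constructor
  · exact fun h => ⟨by linarith, by linarith⟩
  · rintro ⟨h_opt, h_zero⟩
    linarith

lemma F2_le_frobSq_add_IOT (hμ : MemLp id 2 μ) (hν : MemLp id 2 ν)
    (A : Matrix (Fin dx) (Fin dy) ℝ) : F2 μ ν ≤ 8 * frobSq A + IOT A μ ν := by
  obtain ⟨π, hπ⟩ := exists_isOptOT_costA hμ hν A
  rw [IOT, hπ.otCost_eq]
  exact hπ.1.F2_le_frobSq_add_integral_costA hμ hν A

lemma IsOptOT.isOptIGW_and_eq_half_smul_crossCov (hμ : MemLp id 2 μ) (hν : MemLp id 2 ν)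
    {A : Matrix (Fin dx) (Fin dy) ℝ} (hπ : IsOptOT (costA A) π μ ν)
    (hA : 8 * frobSq A + IOT A μ ν = F2 μ ν) :
    IsOptIGW π μ ν ∧ A = (1 / 2 : ℝ) • crossCov π := by
  rw [IOT, hπ.otCost_eq] at hA
  exact (hπ.1.frobSq_add_integral_costA_eq_F2_iff hμ hν).1 hA

lemma IsOptIGW.frobSq_add_IOT_eq_F2 (hμ : MemLp id 2 μ) (hν : MemLp id 2 ν)
    (hπ : IsOptIGW π μ ν) :
    8 * frobSq ((1 / 2 : ℝ) • crossCov π) + IOT ((1 / 2 : ℝ) • crossCov π) μ ν = F2 μ ν := by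
  set A := (1 / 2 : ℝ) • crossCov π with hA
  have h_eq : 8 * frobSq A + ∫ p, costA A p.1 p.2 ∂π = F2 μ ν :=
    (hπ.1.frobSq_add_integral_costA_eq_F2_iff hμ hν).2 ⟨hπ, hA⟩
  have h_opt : IsOptOT (costA A) π μ ν := ⟨hπ.1, fun π' hπ' => by
    linarith [hπ'.F2_le_frobSq_add_integral_costA hμ hν A]⟩
  rwa [IOT, h_opt.otCost_eq]

end Duality

lemma memLp_id_two_of_integrable_norm_pow_four {E : Type*} [NormedAddCommGroup E]
    [MeasurableSpace E] [OpensMeasurableSpace E] [SecondCountableTopology E] {μ : Measure E}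
    [IsFiniteMeasure μ] (h : Integrable (fun x => ‖x‖ ^ 4) μ) : MemLp id 2 μ :=
  (memLp_two_iff_integrable_sq_norm aestronglyMeasurable_id).2
    (integrable_norm_pow_of_le aestronglyMeasurable_id (by norm_num) h)

theorem igw_duality_general (dx dy : ℕ) (μ : Measure (Ed dx)) (ν : Measure (Ed dy))
    [IsProbabilityMeasure μ] [IsProbabilityMeasure ν]
    (hμ : MemLp id 2 μ) (hν : MemLp id 2 ν) :
    F2 μ ν = sInf {v : ℝ | ∃ A : Matrix (Fin dx) (Fin dy) ℝ, v = 8 * frobSq A + IOT A μ ν} ∧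
    (∃ A : Matrix (Fin dx) (Fin dy) ℝ,
      (∀ i j, |A i j| ≤ Real.sqrt (M2 μ * M2 ν) / 2) ∧
      8 * frobSq A + IOT A μ ν = F2 μ ν) ∧
    (∀ A : Matrix (Fin dx) (Fin dy) ℝ, 8 * frobSq A + IOT A μ ν = F2 μ ν →
      ∀ π : Measure (Ed dx × Ed dy), IsOptOT (costA A) π μ ν →
        IsOptIGW π μ ν ∧ A = (1 / 2 : ℝ) • crossCov π) ∧
    (∀ A : Matrix (Fin dx) (Fin dy) ℝ, 8 * frobSq A + IOT A μ ν = F2 μ ν →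
      ∃ π : Measure (Ed dx × Ed dy), IsOptIGW π μ ν ∧ A = (1 / 2 : ℝ) • crossCov π ∧
        IsOptOT (costA A) π μ ν) := by
  obtain ⟨π₀, hπ₀⟩ := exists_isOptIGW hμ hν
  have h_attained := hπ₀.frobSq_add_IOT_eq_F2 hμ hν
  have h_least : IsLeast {v : ℝ | ∃ A : Matrix (Fin dx) (Fin dy) ℝ, v = 8 * frobSq A + IOT A μ ν}
      (F2 μ ν) :=
    ⟨⟨_, h_attained.symm⟩, by rintro _ ⟨A, rfl⟩; exact F2_le_frobSq_add_IOT hμ hν A⟩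
  refine ⟨h_least.csInf_eq.symm, ⟨_, hπ₀.1.abs_half_smul_crossCov_le hμ hν, h_attained⟩,
    fun A hA π hπ => hπ.isOptIGW_and_eq_half_smul_crossCov hμ hν hA, fun A hA => ?_⟩
  obtain ⟨π, hπ⟩ := exists_isOptOT_costA hμ hν A
  obtain ⟨hπ_igw, hπ_eq⟩ := hπ.isOptIGW_and_eq_half_smul_crossCov hμ hν hA
  exact ⟨π, hπ_igw, hπ_eq, hπ⟩

/-- IGW duality. -/
theorem igw_duality (dx dy : ℕ)
    (μ : Measure (Ed dx)) (ν : Measure (Ed dy))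
    (hμ : IsProbabilityMeasure μ) (hν : IsProbabilityMeasure ν)
    (hμ4 : Integrable (fun x => ‖x‖ ^ 4) μ) (hν4 : Integrable (fun y => ‖y‖ ^ 4) ν) :
    -- the dual representation
    F2 μ ν = sInf {v : ℝ | ∃ A : Matrix (Fin dx) (Fin dy) ℝ, v = 8 * frobSq A + IOT A μ ν} ∧
    -- the infimum is achieved in the rectangle `[-M/2, M/2]^{dx×dy}`
    (∃ A : Matrix (Fin dx) (Fin dy) ℝ,
      (∀ i j, |A i j| ≤ Real.sqrt (M2 μ * M2 ν) / 2) ∧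
      8 * frobSq A + IOT A μ ν = F2 μ ν) ∧
    -- (i) any optimal coupling for `IOT_{A*}` with `A*` an infimizer is IGW optimal
    (∀ A : Matrix (Fin dx) (Fin dy) ℝ, 8 * frobSq A + IOT A μ ν = F2 μ ν →
      ∀ π : Measure (Ed dx × Ed dy), IsOptOT (costA A) π μ ν →
        IsOptIGW π μ ν ∧ A = (1 / 2 : ℝ) • crossCov π) ∧
    -- (ii) conversely, any infimizer `A*` is induced by an optimal IGW coupling `π*`,
    -- which is then optimal for `IOT_{A*}`
    (∀ A : Matrix (Fin dx) (Fin dy) ℝ, 8 * frobSq A + IOT A μ ν = F2 μ ν →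
      ∃ π : Measure (Ed dx × Ed dy), IsOptIGW π μ ν ∧ A = (1 / 2 : ℝ) • crossCov π ∧
        IsOptOT (costA A) π μ ν) := by
  exact igw_duality_general dx dy μ ν (memLp_id_two_of_integrable_norm_pow_four hμ4)
    (memLp_id_two_of_integrable_norm_pow_four hν4)
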